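/- The kernel of T is trivial: if ψ ∈ H̃^{-1/2}(Γ) satisfies Tψ = 0, then ψ = 0. (In the proof: ⟨Tψ, ψ⟩ is, up to a positive constant, ∫_{ℝ²} (i/√(k²−|ξ|²)) |ψ̂(ξ)|² dξ; its imaginary part vanishing forces ψ̂ = 0 on |ξ| < k and its real part vanishing forces ψ̂ = 0 on |ξ| > k, hence ψ = 0.) -/

import Mathlib

noncomputable section

open MeasureTheory Complex Filter Topology
open scoped Real NNReal ContDiff

/-- The plane `ℝ²`. -/
abbrev R2 : Type := EuclideanSpace ℝ (Fin 2)

/-- Euclidean dot product on `ℝ²`. -/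
def rdot (x ξ : R2) : ℝ := x 0 * ξ 0 + x 1 * ξ 1

/-- `testFT φ ξ = ∫ e^{i x·ξ} φ(x) dx`, the (inverse-type) Fourier integral of a
test function `φ`. -/
def testFT (φ : R2 → ℂ) (ξ : R2) : ℂ :=
  ∫ x : R2, Complex.exp (Complex.I * (rdot x ξ : ℂ)) * φ x

/-- The squared `H^s(ℝ²)` norm of the distribution whose Fourier transform is `F`:
`‖f‖² = (2π)⁻² ∫ (1+|ξ|²)^s |f̂(ξ)|² dξ`. -/
def wnormSq (s : ℝ) (F : R2 → ℂ) : ℝ :=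
  ((2 * π) ^ 2)⁻¹ * ∫ ξ : R2, ((1 : ℝ) + ‖ξ‖ ^ 2) ^ s * ‖F ξ‖ ^ 2

/-- The `H^s(ℝ²)` norm (Fourier-side representation). -/
def wnorm (s : ℝ) (F : R2 → ℂ) : ℝ := Real.sqrt (wnormSq s F)

/-- `F` is the Fourier transform of an element of `H^s(ℝ²)`. -/
def MemHs (s : ℝ) (F : R2 → ℂ) : Prop :=
  AEStronglyMeasurable F (volume : Measure R2) ∧
    Integrable (fun ξ : R2 => ((1 : ℝ) + ‖ξ‖ ^ 2) ^ s * ‖F ξ‖ ^ 2) volume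

/-- An element `f` of `H̃^s(Γ)`: a distribution on `ℝ²` of Sobolev regularity `s`
supported in the closure of `Γ`, represented by its Fourier transform `ft`
(a continuous function, `f` being a compactly supported distribution).
The support condition is expressed by testing against smooth compactly supported
functions `φ` whose support avoids `closure Γ`, via the Parseval pairing
`∫ f φ dx = (2π)⁻² ∫ f̂(ξ) φ̌(ξ) dξ` with `φ̌(ξ) = ∫ e^{ix·ξ} φ(x) dx`. -/
structure HTildeElt (s : ℝ) (Γ : Set R2) where
  ft : R2 → ℂ
  cont : Continuous ft
  mem : Integrable (fun ξ : R2 => ((1 : ℝ) + ‖ξ‖ ^ 2) ^ s * ‖ft ξ‖ ^ 2) volume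
  supp : ∀ φ : R2 → ℂ, ContDiff ℝ ∞ φ → HasCompactSupport φ →
    tsupport φ ∩ closure Γ = ∅ → (∫ ξ : R2, ft ξ * testFT φ ξ) = 0

/-- `Γ` is a bounded Lipschitz domain in `ℝ²`: a nonempty bounded open set whose
boundary is locally, after a rigid motion, the graph of a Lipschitz function with
the domain on one side. -/
def IsLipschitzDomain (Γ : Set R2) : Prop :=
  IsOpen Γ ∧ Bornology.IsBounded Γ ∧ Γ.Nonempty ∧
    ∀ x ∈ frontier Γ, ∃ (e : R2 ≃ₗᵢ[ℝ] R2) (L : ℝ≥0) (f : ℝ → ℝ) (U : Set R2),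
      LipschitzWith L f ∧ IsOpen U ∧ x ∈ U ∧
        ∀ y ∈ U, (y ∈ Γ ↔ f (e y 0) < e y 1)

/-- `ξ·V̂(ξ)`, i.e. `-i` times the Fourier transform of `div V`. -/
def dotFt (F1 F2 : R2 → ℂ) (ξ : R2) : ℂ := (ξ 0 : ℂ) * F1 ξ + (ξ 1 : ℂ) * F2 ξ

/-- `ξ⊥·V̂(ξ)`, i.e. `-i` times the Fourier transform of `curl V`. -/
def curlFt (F1 F2 : R2 → ℂ) (ξ : R2) : ℂ := (ξ 1 : ℂ) * F1 ξ - (ξ 0 : ℂ) * F2 ξ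

/-- An element of `X = H̃^{-1/2}_div(Γ)`: a pair of elements of `H̃^{-1/2}(Γ)`
whose distributional divergence also belongs to `H̃^{-1/2}(Γ)`. -/
structure Xelt (Γ : Set R2) where
  c1 : HTildeElt (-(1/2) : ℝ) Γ
  c2 : HTildeElt (-(1/2) : ℝ) Γ
  divMem : Integrable (fun ξ : R2 =>
    ((1 : ℝ) + ‖ξ‖ ^ 2) ^ (-(1/2) : ℝ) * ‖dotFt c1.ft c2.ft ξ‖ ^ 2) volume

/-- The Fourier transform of `div V`. -/
def divFt {Γ : Set R2} (V : Xelt Γ) (ξ : R2) : ℂ :=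
  Complex.I * dotFt V.c1.ft V.c2.ft ξ

/-- The squared `H`-norm `‖V‖²_H` of a vector field. -/
def HnormSq {Γ : Set R2} (V : Xelt Γ) : ℝ :=
  wnormSq (-(1/2)) V.c1.ft + wnormSq (-(1/2)) V.c2.ft

/-- The squared `X`-norm `‖V‖²_X = ‖V‖²_H + ‖div V‖²_{H̃^{-1/2}}`. -/
def XnormSq {Γ : Set R2} (V : Xelt Γ) : ℝ :=
  HnormSq V + wnormSq (-(1/2)) (divFt V)

/-- The `X`-norm. -/
def Xnorm {Γ : Set R2} (V : Xelt Γ) : ℝ := Real.sqrt (XnormSq V)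

/-- `ĝ₀(ξ) = i/√(k²-|ξ|²)`, with the branch `√(k²-|ξ|²) = i√(|ξ|²-k²)` for `|ξ| > k`. -/
def g0hat (k : ℝ) (ξ : R2) : ℂ :=
  if ‖ξ‖ < k then Complex.I / ((Real.sqrt (k ^ 2 - ‖ξ‖ ^ 2) : ℝ) : ℂ)
  else 1 / ((Real.sqrt (‖ξ‖ ^ 2 - k ^ 2) : ℝ) : ℂ)

/-- The integrand of the sesquilinear form `B`:
`ĝ₀(ξ) [ (|ξ|²-k²) a₁ b̄₁ - k² a₂ b̄₂ ]` with `a₁ = ξ·Ŵ/|ξ|`, `a₂ = ξ⊥·Ŵ/|ξ|`, etc. -/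
def Bintegrand (k : ℝ) (F1 F2 G1 G2 : R2 → ℂ) (ξ : R2) : ℂ :=
  g0hat k ξ *
    (((‖ξ‖ ^ 2 - k ^ 2 : ℝ) : ℂ) * (dotFt F1 F2 ξ * starRingEnd ℂ (dotFt G1 G2 ξ)) -
      ((k ^ 2 : ℝ) : ℂ) * (curlFt F1 F2 ξ * starRingEnd ℂ (curlFt G1 G2 ξ))) /
    ((‖ξ‖ ^ 2 : ℝ) : ℂ)

/-- The sesquilinear form `B(W,V)`. -/
def Bform (k : ℝ) {Γ : Set R2} (W V : Xelt Γ) : ℂ :=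
  ∫ ξ : R2, Bintegrand k W.c1.ft W.c2.ft V.c1.ft V.c2.ft ξ

/-- The sesquilinear form `E(q,V) = B(curl⃗ q, V)`, where
`curl⃗ q = (∂q/∂x₂, -∂q/∂x₁)` has Fourier transform `(iξ₂ q̂, -iξ₁ q̂)`. -/
def Eform (k : ℝ) {Γ : Set R2} (q : HTildeElt (1/2 : ℝ) Γ) (V : Xelt Γ) : ℂ :=
  ∫ ξ : R2, Bintegrand k (fun η => Complex.I * (η 1 : ℂ) * q.ft η)
      (fun η => -(Complex.I * (η 0 : ℂ) * q.ft η)) V.c1.ft V.c2.ft ξ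

/-- The inner product of the Hilbert space `X`; by the Riesz representation
theorem, every bounded conjugate-linear functional on `X` is `V ↦ Xinner Y V`
for a unique `Y ∈ X`, with functional norm `Xnorm Y`. -/
def Xinner {Γ : Set R2} (Y V : Xelt Γ) : ℂ :=
  ((((2 * π) ^ 2)⁻¹ : ℝ) : ℂ) * ∫ ξ : R2, ((((1 : ℝ) + ‖ξ‖ ^ 2) ^ (-(1/2) : ℝ) : ℝ) : ℂ) *
    (Y.c1.ft ξ * starRingEnd ℂ (V.c1.ft ξ) + Y.c2.ft ξ * starRingEnd ℂ (V.c2.ft ξ) +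
      divFt Y ξ * starRingEnd ℂ (divFt V ξ))

/-- `√(k²-|ξ|²)`, with the branch `i√(|ξ|²-k²)` for `|ξ| > k`. -/
def rootk (k : ℝ) (ξ : R2) : ℂ :=
  if ‖ξ‖ < k then ((Real.sqrt (k ^ 2 - ‖ξ‖ ^ 2) : ℝ) : ℂ)
  else Complex.I * ((Real.sqrt (‖ξ‖ ^ 2 - k ^ 2) : ℝ) : ℂ)

/-- The Fourier multiplier `i/(2√(k²-|ξ|²))` of the Helmholtz single-layer
operator `T` with kernel `e^{ik|x-y|}/(4π|x-y|)`. -/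
def mT (k : ℝ) (ξ : R2) : ℂ := Complex.I / (2 * rootk k ξ)

/-- The Fourier multiplier `1/(2|ξ|)` of the Laplace single-layer operator `T₀`
with kernel `1/(4π|x-y|)`. -/
def mT0 (ξ : R2) : ℂ := 1 / (2 * ((‖ξ‖ : ℝ) : ℂ))

/-- The Fourier multiplier of `R = T - T₀`. -/
def mR (k : ℝ) (ξ : R2) : ℂ := mT k ξ - mT0 ξ

/-- The distributions with Fourier data `G` and `E` have the same restriction to
the open set `Γ`: `⟨G - E, φ⟩ = 0` for all smooth `φ` compactly supported in `Γ`
(pairing written on the Fourier side). -/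
def AgreeOn (Γ : Set R2) (G E : R2 → ℂ) : Prop :=
  ∀ φ : R2 → ℂ, ContDiff ℝ ∞ φ → HasCompactSupport φ → tsupport φ ⊆ Γ →
    (∫ ξ : R2, (G ξ - E ξ) * testFT φ ξ) = 0

/-- The duality pairing `⟨f, ψ⟩` between `H^{1/2}(Γ)` and `H̃^{-1/2}(Γ)`, written
on the Fourier side (Plancherel): `(2π)⁻² ∫ f̂(ξ) conj(ψ̂(ξ)) dξ`, where `G = f̂`
is the Fourier data of (an extension of) `f`. -/
def dualPair (G ψ : R2 → ℂ) : ℂ :=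
  ((((2 * π) ^ 2)⁻¹ : ℝ) : ℂ) * ∫ ξ : R2, G ξ * starRingEnd ℂ (ψ ξ)

/-!
The pairing `∫ m(ξ) |ψ̂(ξ)|² dξ` of `Tψ` with `ψ` vanishes: `Tψ` vanishes on `Γ`, and `C_c^∞(Γ)` is
dense in `H̃^{-1/2}(Γ)`. The multiplier `m` is positive imaginary inside the circle `|ξ| = k` and
positive outside it, so the imaginary and real parts of the pairing force `ψ̂` to vanish on both
sides of the circle, and everywhere by continuity.

The density is used in the dual form: if `M`, in `H^{-s}` up to an integrable singularity, vanishes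
on `Γ` and `F ∈ H^s` is supported in `closure Γ`, then `⟨M, F⟩ = 0`. A partition of unity reduces to
a neighbourhood of a boundary point on which `Γ` contains a small cone with a fixed axis `e` at
every point of `closure Γ`. Mollifying `M` there at scale `t` with a bump function centred at
`e` only takes averages over the cones, so the mollified `M` vanishes near `closure Γ` and pairs to
zero with `F`; then let `t → 0`. Peetre's inequality gives the integrability needed to exchange the
integrals on the Fourier side.
-/

section SobolevWeight

variable {E : Type*} [NormedAddCommGroup E]

/-- The Bessel weight `⟨ξ⟩ ^ s = (1 + ‖ξ‖²) ^ (s / 2)`, so that `F` is the Fourier transform of an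
element of `H^s` exactly when `⟨ξ⟩ ^ s * F` is square integrable. -/
def sobolevWeight (s : ℝ) (ξ : E) : ℝ := (1 + ‖ξ‖ ^ 2) ^ (s / 2)

lemma sobolevWeight_pos (s : ℝ) (ξ : E) : 0 < sobolevWeight s ξ := by
  unfold sobolevWeight; positivity

lemma norm_ofReal_sobolevWeight (s : ℝ) (ξ : E) :
    ‖(sobolevWeight s ξ : ℂ)‖ = sobolevWeight s ξ := by
  rw [norm_real, Real.norm_of_nonneg (sobolevWeight_pos s ξ).le]

lemma continuous_sobolevWeight (s : ℝ) : Continuous (sobolevWeight s : E → ℝ) :=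
  (by fun_prop : Continuous fun ξ : E => 1 + ‖ξ‖ ^ 2).rpow_const
    fun ξ => Or.inl (by positivity)

lemma sobolevWeight_zero (ξ : E) : sobolevWeight 0 ξ = 1 := by
  simp [sobolevWeight]

lemma sobolevWeight_add (s t : ℝ) (ξ : E) :
    sobolevWeight (s + t) ξ = sobolevWeight s ξ * sobolevWeight t ξ := by
  rw [sobolevWeight, add_div, Real.rpow_add (by positivity), sobolevWeight, sobolevWeight]

lemma sobolevWeight_neg_mul_self (s : ℝ) (ξ : E) :
    sobolevWeight (-s) ξ * sobolevWeight s ξ = 1 := by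
  rw [← sobolevWeight_add, neg_add_cancel, sobolevWeight_zero]

lemma norm_pow_le_sobolevWeight (n : ℕ) (ξ : E) : ‖ξ‖ ^ n ≤ sobolevWeight n ξ :=
  calc ‖ξ‖ ^ n = (‖ξ‖ ^ 2) ^ ((n : ℝ) / 2) := by
        rw [← Real.rpow_natCast_mul (norm_nonneg ξ), ← Real.rpow_natCast]
        congr 1; push_cast; ring
    _ ≤ sobolevWeight n ξ := by
        unfold sobolevWeight; gcongr; linarith

lemma one_add_norm_sq_le (ξ η : E) :
    1 + ‖ξ‖ ^ 2 ≤ 2 * (1 + ‖ξ + η‖ ^ 2) * (1 + ‖η‖ ^ 2) := by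
  have triangle : ‖ξ‖ ≤ ‖ξ + η‖ + ‖η‖ := by simpa using norm_sub_le (ξ + η) η
  have := pow_le_pow_left₀ (norm_nonneg ξ) triangle 2
  nlinarith [sq_nonneg (‖ξ + η‖ - ‖η‖), sq_nonneg (‖ξ + η‖ * ‖η‖)]

lemma peetre_inequality (s : ℝ) (ξ η : E) :
    sobolevWeight s ξ * sobolevWeight (-s) η ≤ 2 ^ (|s| / 2) * sobolevWeight |s| (ξ + η) := by
  wlog hs : 0 ≤ s generalizing s ξ η
  · have := this (-s) η ξ (by linarith)
    rwa [neg_neg, abs_neg, add_comm η, mul_comm] at this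
  calc sobolevWeight s ξ * sobolevWeight (-s) η
      ≤ (2 * (1 + ‖ξ + η‖ ^ 2) * (1 + ‖η‖ ^ 2)) ^ (s / 2) * sobolevWeight (-s) η := by
        refine mul_le_mul_of_nonneg_right ?_ (sobolevWeight_pos _ _).le
        exact Real.rpow_le_rpow (by positivity) (one_add_norm_sq_le ξ η) (by positivity)
    _ = 2 ^ (s / 2) * sobolevWeight s (ξ + η) * (sobolevWeight (-s) η * sobolevWeight s η) := by
        rw [Real.mul_rpow (by positivity) (by positivity),
          Real.mul_rpow (by positivity) (by positivity)]
        simp only [sobolevWeight]; ring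
    _ = 2 ^ (|s| / 2) * sobolevWeight |s| (ξ + η) := by
        rw [sobolevWeight_neg_mul_self, mul_one, abs_of_nonneg hs]

lemma hasTemperateGrowth_sobolevWeight [InnerProductSpace ℝ E] (s : ℝ) :
    (sobolevWeight s : E → ℝ).HasTemperateGrowth :=
  Function.hasTemperateGrowth_one_add_norm_sq_rpow E (s / 2)

end SobolevWeight

section Shear

variable {G 𝕜 : Type*} [RCLike 𝕜] [AddCommGroup G] [MeasurableSpace G] [MeasurableAdd₂ G]
  {μ : Measure G} [SFinite μ] [μ.IsAddLeftInvariant] {u v w : G → 𝕜}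

lemma integrable_mul_comp_add (hu : Integrable u μ) (hv : Integrable v μ) :
    Integrable (fun p : G × G => u p.1 * v (p.1 + p.2)) (μ.prod μ) :=
  (measurePreserving_prod_add μ μ).integrable_comp_of_integrable (hu.mul_prod hv)

lemma integrable_mul_comp_add' (hu : Integrable u μ) (hv : Integrable v μ) :
    Integrable (fun p : G × G => u p.2 * v (p.1 + p.2)) (μ.prod μ) := by
  simpa only [Function.comp_def, Prod.fst_swap, Prod.snd_swap, add_comm]
    using (integrable_mul_comp_add hu hv).swap

lemma aestronglyMeasurable_mul_mul_comp_add (hu : AEStronglyMeasurable u μ)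
    (hv : AEStronglyMeasurable v μ) (hw : AEStronglyMeasurable w μ) :
    AEStronglyMeasurable (fun p : G × G => u p.1 * v p.2 * w (p.1 + p.2)) (μ.prod μ) :=
  (hu.comp_fst.mul hv.comp_snd).mul <| hw.comp_quasiMeasurePreserving <|
    Measure.quasiMeasurePreserving_snd.comp (measurePreserving_prod_add μ μ).quasiMeasurePreserving

lemma integrable_mul_mul_comp_add_of_L2_L2_L1 (hu : MemLp u 2 μ) (hv : MemLp v 2 μ)
    (hw : Integrable w μ) :
    Integrable (fun p : G × G => u p.1 * v p.2 * w (p.1 + p.2)) (μ.prod μ) := by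
  have bound := (integrable_mul_comp_add (hu.integrable_norm_pow two_ne_zero) hw.norm).add
    (integrable_mul_comp_add' (hv.integrable_norm_pow two_ne_zero) hw.norm)
  refine bound.mono' (aestronglyMeasurable_mul_mul_comp_add hu.1 hv.1 hw.1) (ae_of_all _ ?_)
  rintro ⟨x, y⟩
  calc ‖u x * v y * w (x + y)‖ = ‖u x‖ * ‖v y‖ * ‖w (x + y)‖ := by simp only [norm_mul]
    _ ≤ (‖u x‖ ^ 2 + ‖v y‖ ^ 2) * ‖w (x + y)‖ := by
        gcongr
        nlinarith [sq_nonneg (‖u x‖ - ‖v y‖), sq_nonneg ‖u x‖, sq_nonneg ‖v y‖]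
    _ = _ := by simp only [Pi.add_apply]; ring

lemma integrable_mul_mul_comp_add_of_L1_L2_L2 (hu : Integrable u μ) (hv : MemLp v 2 μ)
    (hw : MemLp w 2 μ) :
    Integrable (fun p : G × G => u p.1 * v p.2 * w (p.1 + p.2)) (μ.prod μ) := by
  have bound := (hu.norm.mul_prod (hv.integrable_norm_pow two_ne_zero)).add
    (integrable_mul_comp_add hu.norm (hw.integrable_norm_pow two_ne_zero))
  refine bound.mono' (aestronglyMeasurable_mul_mul_comp_add hu.1 hv.1 hw.1) (ae_of_all _ ?_)
  rintro ⟨x, y⟩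
  calc ‖u x * v y * w (x + y)‖ = ‖u x‖ * (‖v y‖ * ‖w (x + y)‖) := by
        simp only [norm_mul, mul_assoc]
    _ ≤ ‖u x‖ * (‖v y‖ ^ 2 + ‖w (x + y)‖ ^ 2) := by
        gcongr
        nlinarith [sq_nonneg (‖v y‖ - ‖w (x + y)‖), sq_nonneg ‖v y‖, sq_nonneg ‖w (x + y)‖]
    _ = _ := by simp only [Pi.add_apply]; ring

end Shear

section TestFunction

variable {E : Type*} [NormedAddCommGroup E] [NormedSpace ℝ E]

/-- The test functions of distribution theory: smooth, complex-valued, compactly supported. -/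
structure IsTestFunction (φ : E → ℂ) : Prop where
  contDiff : ContDiff ℝ ∞ φ
  hasCompactSupport : HasCompactSupport φ

namespace IsTestFunction

variable {φ : E → ℂ}

lemma continuous (hφ : IsTestFunction φ) : Continuous φ := hφ.contDiff.continuous

lemma integrable [MeasurableSpace E] [OpensMeasurableSpace E] {μ : Measure E}
    [IsFiniteMeasureOnCompacts μ] (hφ : IsTestFunction φ) : Integrable φ μ :=
  hφ.continuous.integrable_of_hasCompactSupport hφ.hasCompactSupport

lemma mul_left {u : E → ℂ} (hφ : IsTestFunction φ) (hu : ContDiff ℝ ∞ u) :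
    IsTestFunction fun x => u x * φ x :=
  ⟨hu.mul hφ.contDiff, hφ.hasCompactSupport.mul_left⟩

lemma star (hφ : IsTestFunction φ) : IsTestFunction fun x => starRingEnd ℂ (φ x) :=
  ⟨conjCLE.contDiff.comp hφ.contDiff, hφ.hasCompactSupport.comp_left (map_zero _)⟩

lemma comp_dilation (hφ : IsTestFunction φ) {t : ℝ} (ht : 0 < t) (y : E) :
    IsTestFunction fun x => φ (t⁻¹ • (x - y)) where
  contDiff := hφ.contDiff.comp (contDiff_const.smul (contDiff_id.sub contDiff_const))
  hasCompactSupport := hφ.hasCompactSupport.comp_homeomorph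
    ((Homeomorph.subRight y).trans (Homeomorph.smulOfNeZero t⁻¹ (inv_ne_zero ht.ne')))

end IsTestFunction

lemma tsupport_comp_dilation_subset {φ : E → ℂ} {e : E} {r t : ℝ} (ht : 0 < t)
    (hφ : tsupport φ ⊆ Metric.closedBall e r) (y : E) :
    tsupport (fun x => φ (t⁻¹ • (x - y))) ⊆ Metric.closedBall (y + t • e) (t * r) := by
  refine closure_minimal (fun x hx => ?_) Metric.isClosed_closedBall
  have hmem : t⁻¹ • (x - y) ∈ Metric.closedBall e r := hφ (subset_tsupport φ hx)
  rw [mem_closedBall_iff_norm] at hmem ⊢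
  have : x - (y + t • e) = t • (t⁻¹ • (x - y) - e) := by
    rw [smul_sub, smul_inv_smul₀ ht.ne', sub_add_eq_sub_sub]
  rw [this, norm_smul, Real.norm_of_nonneg ht.le]
  gcongr

open scoped Manifold in
lemma IsTestFunction.exists_sum_eq_of_subset_iUnion [FiniteDimensional ℝ E] {φ : E → ℂ}
    (hφ : IsTestFunction φ) {ι : Type*} {U : ι → Set E} (hU : ∀ i, IsOpen (U i))
    (hcover : tsupport φ ⊆ ⋃ i, U i) :
    ∃ (s : Finset ι) (f : s → E → ℂ), (∀ i, IsTestFunction (f i) ∧ tsupport (f i) ⊆ U i) ∧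
      φ = fun x => ∑ i, f i x := by
  obtain ⟨s, hs⟩ := hφ.hasCompactSupport.elim_finite_subcover U hU hcover
  obtain ⟨p, hp⟩ := SmoothPartitionOfUnity.exists_isSubordinate 𝓘(ℝ, E) (isClosed_tsupport φ)
    (fun i : s => U i) (fun i => hU i) (by simpa only [Set.iUnion_subtype] using hs)
  refine ⟨s, fun i x => (p i x : ℂ) * φ x, fun i => ⟨hφ.mul_left <|
    ofRealCLM.contDiff.comp (p i).contMDiff.contDiff, tsupport_mul_subset_left.trans <|
      (tsupport_comp_subset ofReal_zero (p i)).trans (hp i)⟩, funext fun x => ?_⟩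
  rw [← Finset.sum_mul, ← ofReal_sum]
  by_cases hx : x ∈ tsupport φ
  · rw [← finsum_eq_sum_of_fintype, p.sum_eq_one hx, ofReal_one, one_mul]
  · rw [image_eq_zero_of_notMem_tsupport hx, mul_zero]

variable [HasContDiffBump E]

lemma tsupport_ofReal_contDiffBump_subset {c : E} (f : ContDiffBump c) :
    tsupport (fun x => (f x : ℂ)) ⊆ Metric.closedBall c f.rOut :=
  (tsupport_comp_subset ofReal_zero f).trans f.tsupport_eq.subset

variable [FiniteDimensional ℝ E]

lemma isTestFunction_contDiffBump {c : E} (f : ContDiffBump c) :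
    IsTestFunction fun x => (f x : ℂ) :=
  ⟨ofRealCLM.contDiff.comp f.contDiff, f.hasCompactSupport.comp_left ofReal_zero⟩

lemma exists_isTestFunction_integral_ne_zero [MeasurableSpace E] [BorelSpace E] (μ : Measure E)
    [IsFiniteMeasureOnCompacts μ] [μ.IsOpenPosMeasure] (e : E) {r : ℝ} (hr : 0 < r) :
    ∃ ρ : E → ℂ, IsTestFunction ρ ∧ tsupport ρ ⊆ Metric.closedBall e r ∧ ∫ x, ρ x ∂μ ≠ 0 := by
  let f : ContDiffBump e := ⟨r / 2, r, half_pos hr, half_lt_self hr⟩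
  refine ⟨_, isTestFunction_contDiffBump f, tsupport_ofReal_contDiffBump_subset f, ?_⟩
  rw [integral_complex_ofReal]
  exact_mod_cast f.integral_pos.ne'

lemma exists_isTestFunction_eqOn_one {S : Set E} (hS : Bornology.IsBounded S) :
    ∃ χ : E → ℂ, IsTestFunction χ ∧ ∀ x ∈ S, χ x = 1 := by
  obtain ⟨R, hR, hSR⟩ := hS.subset_closedBall_lt 0 0
  let f : ContDiffBump (0 : E) := ⟨R, R + 1, hR, lt_add_one R⟩
  refine ⟨_, isTestFunction_contDiffBump f, fun x hx => ?_⟩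
  rw [f.one_of_mem_closedBall (hSR hx), ofReal_one]

end TestFunction

section TestFT

open scoped FourierTransform SchwartzMap

lemma rdot_eq_inner (x ξ : R2) : rdot x ξ = inner ℝ x ξ := by
  simp only [rdot, PiLp.inner_apply, Fin.sum_univ_two, RCLike.inner_apply, conj_trivial, mul_comm]

lemma norm_exp_I_mul_rdot (x ξ : R2) : ‖cexp (I * (rdot x ξ : ℂ))‖ = 1 := by
  rw [mul_comm, norm_exp_ofReal_mul_I]

lemma contDiff_exp_I_mul_rdot (ξ : R2) : ContDiff ℝ ∞ fun x => cexp (I * (rdot x ξ : ℂ)) := by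
  simp only [rdot_eq_inner]
  exact (contDiff_const.mul (ofRealCLM.contDiff.comp (contDiff_id.inner ℝ contDiff_const))).cexp

lemma testFT_eq_fourier (φ : R2 → ℂ) (ξ : R2) : testFT φ ξ = 𝓕 φ ((-(2 * π)⁻¹ : ℝ) • ξ) := by
  rw [Real.fourier_eq', testFT]
  refine integral_congr_ae (ae_of_all _ fun x => ?_)
  have hπ : (π : ℂ) ≠ 0 := ofReal_ne_zero.mpr Real.pi_ne_zero
  simp only [smul_eq_mul, rdot_eq_inner, inner_smul_right]
  congr 2
  push_cast
  field_simp

/-- The bilinear form `-(2π)⁻¹ x·ξ` for which Mathlib's Fourier integral with kernel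
`e^{-2πi L(x, ξ)}` is `testFT`. -/
def testFTForm : R2 →L[ℝ] R2 →L[ℝ] ℝ := (-(2 * π)⁻¹ : ℝ) • innerSL ℝ

lemma testFTForm_apply (x ξ : R2) :
    testFTForm.toLinearMap₁₂ x ξ = -(2 * π)⁻¹ * inner ℝ x ξ := rfl

lemma testFT_eq_fourierIntegral (φ : R2 → ℂ) :
    testFT φ = VectorFourier.fourierIntegral 𝐞 volume testFTForm.toLinearMap₁₂ φ := by
  ext ξ
  rw [testFT_eq_fourier, Real.fourier_eq]
  simp only [VectorFourier.fourierIntegral, testFTForm_apply, inner_smul_right]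

lemma flip_testFTForm : testFTForm.toLinearMap₁₂.flip = testFTForm.toLinearMap₁₂ := by
  ext x ξ
  rw [LinearMap.flip_apply, testFTForm_apply, testFTForm_apply, real_inner_comm]

lemma continuous_testFT {φ : R2 → ℂ} (hφ : Integrable φ) : Continuous (testFT φ) := by
  rw [testFT_eq_fourierIntegral]
  exact VectorFourier.fourierIntegral_continuous Real.continuous_fourierChar
    testFTForm.continuous₂ hφ

lemma norm_testFT_le (φ : R2 → ℂ) (ξ : R2) : ‖testFT φ ξ‖ ≤ ∫ x, ‖φ x‖ := by
  rw [testFT_eq_fourierIntegral]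
  exact VectorFourier.norm_fourierIntegral_le_integral_norm _ _ _ _ _

lemma contDiff_testFT {φ : R2 → ℂ} (hφ : ∀ n : ℕ, Integrable fun x => ‖x‖ ^ n * ‖φ x‖) :
    ContDiff ℝ ∞ (testFT φ) := by
  rw [testFT_eq_fourierIntegral]
  exact VectorFourier.contDiff_fourierIntegral testFTForm fun n _ => hφ n

lemma integral_testFT_mul {φ χ : R2 → ℂ} (hφ : Integrable φ) (hχ : Integrable χ) :
    ∫ ξ, testFT φ ξ * χ ξ = ∫ x, φ x * testFT χ x := by
  have := VectorFourier.integral_fourierIntegral_smul_eq_flip (L := testFTForm.toLinearMap₁₂)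
    Real.continuous_fourierChar testFTForm.continuous₂ hφ hχ
  simpa only [flip_testFTForm, ← testFT_eq_fourierIntegral, smul_eq_mul] using this

lemma testFT_testFT {g : R2 → ℂ} (hcont : Continuous g) (hg : Integrable g)
    (hg' : Integrable (testFT g)) (ξ : R2) : testFT (testFT g) ξ = (2 * π) ^ 2 * g (-ξ) := by
  have hc : (-(2 * π)⁻¹ : ℝ) ≠ 0 := by simp [Real.pi_ne_zero]
  have hFg : Integrable (𝓕 g) := by
    rw [funext (testFT_eq_fourier g)] at hg'
    exact (integrable_comp_smul_iff volume _ hc).mp hg'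
  have inversion := congrFun (hcont.fourierInv_fourier_eq hg hFg) (-ξ)
  have rescale := Measure.integral_comp_smul volume
    (fun z : R2 => cexp (I * (rdot ((-(2 * π) : ℝ) • z) ξ : ℂ)) * 𝓕 g z) (-(2 * π)⁻¹)
  have cancel (x : R2) : (-(2 * π) : ℝ) • (-(2 * π)⁻¹ : ℝ) • x = x := by
    rw [smul_smul, neg_mul_neg, mul_inv_cancel₀ Real.two_pi_pos.ne', one_smul]
  simp only [cancel, ← testFT_eq_fourier] at rescale
  rw [← inversion, Real.fourierInv_eq', testFT, rescale, real_smul]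
  congr 1
  · rw [finrank_euclideanSpace_fin, neg_sq, inv_pow, inv_inv, abs_of_pos (by positivity)]
    push_cast; rfl
  · refine integral_congr_ae (ae_of_all _ fun z => ?_)
    simp only [smul_eq_mul, rdot_eq_inner, inner_smul_left, inner_neg_right]
    congr 2
    simp only [Real.ringHom_apply, neg_mul, ofReal_neg, ofReal_mul, ofReal_ofNat, mul_neg, neg_inj]
    ring

lemma testFT_exp_mul (φ : R2 → ℂ) (ξ η : R2) :
    testFT (fun y => cexp (I * (rdot y η : ℂ)) * φ y) ξ = testFT φ (ξ + η) := by
  refine integral_congr_ae (ae_of_all _ fun x => ?_)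
  simp only [← mul_assoc, ← Complex.exp_add, rdot_eq_inner, inner_add_right, ofReal_add, mul_add]

lemma testFT_comp_dilation (φ : R2 → ℂ) {t : ℝ} (ht : 0 < t) (y ξ : R2) :
    testFT (fun x => φ (t⁻¹ • (x - y))) ξ
      = t ^ 2 * (cexp (I * (rdot ξ y : ℂ)) * testFT φ (t • ξ)) := by
  have rescale := Measure.integral_comp_smul volume
    (fun z => cexp (I * (rdot (t • z + y) ξ : ℂ)) * φ z) t⁻¹
  simp only [smul_inv_smul₀ ht.ne'] at rescale
  rw [testFT, ← integral_add_right_eq_self _ y]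
  simp only [add_sub_cancel_right]
  rw [rescale, testFT, ← integral_const_mul, real_smul]
  congr 1
  · simp [abs_of_pos ht]
  · refine integral_congr_ae (ae_of_all _ fun z => ?_)
    simp only [← mul_assoc, ← Complex.exp_add, rdot_eq_inner, inner_add_left, inner_smul_left,
      inner_smul_right, real_inner_comm ξ y, conj_trivial, ofReal_add, mul_add]
    rw [add_comm]

lemma IsTestFunction.exists_testFT_eq_comp_smul {φ : R2 → ℂ} (hφ : IsTestFunction φ) {t : ℝ}
    (ht : 0 < t) : ∃ φ' : R2 → ℂ, IsTestFunction φ' ∧ ∀ ξ, testFT φ' ξ = testFT φ (t • ξ) := by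
  refine ⟨_, (hφ.comp_dilation ht 0).mul_left (contDiff_const (c := ((t : ℂ) ^ 2)⁻¹)),
    fun ξ => ?_⟩
  have scaled := testFT_comp_dilation φ ht 0 ξ
  rw [testFT] at scaled ⊢
  simp only [mul_left_comm _ ((t : ℂ) ^ 2)⁻¹]
  rw [integral_const_mul, scaled, inv_mul_cancel_left₀ (by exact_mod_cast (pow_pos ht 2).ne')]
  simp [rdot_eq_inner]

lemma testFT_testFT_mul {A χ : R2 → ℂ} (hA : Integrable A) (hχ : Integrable χ) (ξ : R2) :
    testFT (fun y => testFT A y * χ y) ξ = ∫ η, A η * testFT χ (ξ + η) := by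
  have hmod : Integrable fun y => cexp (I * (rdot y ξ : ℂ)) * χ y :=
    hχ.bdd_mul (contDiff_exp_I_mul_rdot ξ).continuous.aestronglyMeasurable
      (ae_of_all _ fun y => (norm_exp_I_mul_rdot y ξ).le)
  calc testFT (fun y => testFT A y * χ y) ξ
      = ∫ y, testFT A y * (cexp (I * (rdot y ξ : ℂ)) * χ y) := by
        simp only [testFT, mul_left_comm]
    _ = ∫ η, A η * testFT χ (ξ + η) := by
        rw [integral_testFT_mul hA hmod]
        simp only [testFT_exp_mul, add_comm ξ]

lemma testFT_finset_sum {ι : Type*} (s : Finset ι) {φ : ι → R2 → ℂ}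
    (hφ : ∀ i ∈ s, Integrable (φ i)) (ξ : R2) :
    testFT (fun x => ∑ i ∈ s, φ i x) ξ = ∑ i ∈ s, testFT (φ i) ξ := by
  simp only [testFT, Finset.mul_sum]
  exact integral_finsetSum s fun i hi =>
    (hφ i hi).bdd_mul (contDiff_exp_I_mul_rdot ξ).continuous.aestronglyMeasurable
      (ae_of_all _ fun y => (norm_exp_I_mul_rdot y ξ).le)

lemma conj_testFT (φ : R2 → ℂ) (ξ : R2) :
    starRingEnd ℂ (testFT φ ξ) = testFT (fun x => starRingEnd ℂ (φ x)) (-ξ) := by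
  rw [testFT, ← integral_conj]
  refine integral_congr_ae (ae_of_all _ fun x => ?_)
  simp [← exp_conj, rdot_eq_inner]

lemma testFT_zero_right (φ : R2 → ℂ) : testFT φ 0 = ∫ x, φ x := by
  simp [testFT, rdot_eq_inner]

lemma IsTestFunction.exists_schwartzMap_weight_mul_testFT {φ : R2 → ℂ} (hφ : IsTestFunction φ)
    (t : ℝ) : ∃ f : 𝓢(R2, ℂ), ∀ ξ, f ξ = sobolevWeight t ξ * testFT φ ξ := by
  let dil : R2 ≃L[ℝ] R2 := ContinuousLinearEquiv.smulLeft
    (Units.mk0 (-(2 * π)⁻¹ : ℝ) (by simp [Real.pi_ne_zero]))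
  refine ⟨SchwartzMap.smulLeftCLM ℂ (sobolevWeight t) (SchwartzMap.compCLMOfContinuousLinearEquiv ℂ
    dil (𝓕 (hφ.hasCompactSupport.toSchwartzMap hφ.contDiff))), fun ξ => ?_⟩
  rw [SchwartzMap.smulLeftCLM_apply_apply (hasTemperateGrowth_sobolevWeight t), real_smul,
    testFT_eq_fourier]
  rfl

lemma IsTestFunction.memLp_weight_mul_testFT {φ : R2 → ℂ} (hφ : IsTestFunction φ)
    (t : ℝ) (p : ENNReal) : MemLp (fun ξ => (sobolevWeight t ξ : ℂ) * testFT φ ξ) p volume := by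
  obtain ⟨f, hf⟩ := hφ.exists_schwartzMap_weight_mul_testFT t
  simpa only [← funext hf] using f.memLp p

end TestFT

section VanishesOn

/-- The distribution with Fourier transform `H` vanishes on `U`. -/
def VanishesOn (U : Set R2) (H : R2 → ℂ) : Prop :=
  ∀ φ : R2 → ℂ, IsTestFunction φ → tsupport φ ⊆ U → ∫ ξ, H ξ * testFT φ ξ = 0

variable {U Γ : Set R2} {H : R2 → ℂ}

lemma AgreeOn.vanishesOn (h : AgreeOn U H fun _ => 0) : VanishesOn U H := fun φ hφ hU => by
  simpa only [sub_zero] using h φ hφ.contDiff hφ.hasCompactSupport hU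

lemma HTildeElt.vanishesOn_compl_closure {s : ℝ} (f : HTildeElt s Γ) :
    VanishesOn (closure Γ)ᶜ f.ft := fun φ hφ hU =>
  f.supp φ hφ.contDiff hφ.hasCompactSupport <|
    Set.disjoint_iff_inter_eq_empty.mp (Set.disjoint_left.mpr fun _ hx => hU hx)

lemma VanishesOn.conj_neg (h : VanishesOn U H) : VanishesOn U fun ξ => starRingEnd ℂ (H (-ξ)) := by
  intro φ hφ hU
  have hstar : tsupport (fun x => starRingEnd ℂ (φ x)) ⊆ U :=
    (tsupport_comp_subset (map_zero (starRingEnd ℂ)) φ).trans hU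
  calc ∫ ξ, starRingEnd ℂ (H (-ξ)) * testFT φ ξ
      = ∫ ξ, starRingEnd ℂ (H (-ξ) * testFT (fun x => starRingEnd ℂ (φ x)) (-ξ)) := by
        simp only [map_mul, conj_testFT, neg_neg, conj_conj]
    _ = starRingEnd ℂ (∫ ξ, H (-ξ) * testFT (fun x => starRingEnd ℂ (φ x)) (-ξ)) := integral_conj
    _ = 0 := by
        rw [integral_neg_eq_self fun ξ => H ξ * testFT (fun x => starRingEnd ℂ (φ x)) ξ,
          h _ hφ.star hstar, map_zero]

/-- Mollification: `H * testFT ρ (t • ·)` is the Fourier transform of the convolution with a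
rescaling of `ρ`, whose values only see the distribution near `y + t • e`. -/
lemma VanishesOn.testFT_mul_testFT_smul_eq_zero (h : VanishesOn U H) {ρ : R2 → ℂ}
    (hρ : IsTestFunction ρ) {e : R2} {r t : ℝ} (hsupp : tsupport ρ ⊆ Metric.closedBall e r)
    (ht : 0 < t) {y : R2} (hy : Metric.closedBall (y + t • e) (t * r) ⊆ U) :
    testFT (fun ξ => H ξ * testFT ρ (t • ξ)) y = 0 := by
  have key := h _ (hρ.comp_dilation ht y) ((tsupport_comp_dilation_subset ht hsupp y).trans hy)
  simp only [testFT_comp_dilation ρ ht, mul_left_comm (H _)] at key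
  rw [integral_const_mul] at key
  exact (mul_eq_zero.mp key).resolve_left (pow_ne_zero 2 (ofReal_ne_zero.mpr ht.ne'))

end VanishesOn

section SobolevSymbol

/-- `H` belongs to `⟨ξ⟩ ^ (-s) (L¹ + L²)`. The square integrable functions alone would describe
the Fourier transforms of `H^s`; the `L¹` part is there for Fourier multipliers with an integrable
singularity, like `mT k` on the circle `‖ξ‖ = k`. -/
def IsSobolevSymbol (s : ℝ) (H : R2 → ℂ) : Prop :=
  ∃ a b : R2 → ℂ, Integrable a ∧ MemLp b 2 volume ∧ ∀ ξ, sobolevWeight s ξ * H ξ = a ξ + b ξ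

variable {s : ℝ} {H F M χ φ : R2 → ℂ}

lemma MemHs.memLp_weight_mul (hF : MemHs s F) :
    MemLp (fun ξ => (sobolevWeight s ξ : ℂ) * F ξ) 2 volume := by
  refine (memLp_two_iff_integrable_sq_norm ?_).mpr (hF.2.congr (ae_of_all _ fun ξ => ?_))
  · exact (continuous_ofReal.comp (continuous_sobolevWeight s)).aestronglyMeasurable.mul hF.1
  · have : sobolevWeight s ξ ^ 2 = (1 + ‖ξ‖ ^ 2) ^ s := by
      rw [sobolevWeight, ← Real.rpow_mul_natCast (by positivity)]
      norm_num
    simp only [norm_mul, norm_ofReal_sobolevWeight, mul_pow, this]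

lemma MemHs.isSobolevSymbol (hF : MemHs s F) : IsSobolevSymbol s F :=
  ⟨0, _, integrable_zero _ _ _, hF.memLp_weight_mul, fun _ => (zero_add _).symm⟩

lemma HTildeElt.memHs {Γ : Set R2} (f : HTildeElt s Γ) : MemHs s f.ft :=
  ⟨f.cont.aestronglyMeasurable, f.mem⟩

lemma MemHs.conj_neg (hF : MemHs s F) : MemHs s fun ξ => starRingEnd ℂ (F (-ξ)) :=
  ⟨continuous_conj.comp_aestronglyMeasurable <|
      hF.1.comp_measurePreserving (Measure.measurePreserving_neg _),
    by simpa only [norm_neg, RCLike.norm_conj] using hF.2.comp_neg⟩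

lemma eq_sobolevWeight_neg_mul {z : ℂ} {ξ : R2} (h : sobolevWeight s ξ * H ξ = z) :
    H ξ = sobolevWeight (-s) ξ * z := by
  rw [← h, ← mul_assoc, ← ofReal_mul, sobolevWeight_neg_mul_self, ofReal_one, one_mul]

namespace IsSobolevSymbol

lemma aestronglyMeasurable (hH : IsSobolevSymbol s H) : AEStronglyMeasurable H volume := by
  obtain ⟨a, b, ha, hb, hab⟩ := hH
  rw [show H = _ from funext fun ξ => eq_sobolevWeight_neg_mul (hab ξ)]
  exact (continuous_ofReal.comp (continuous_sobolevWeight _)).aestronglyMeasurable.mul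
    (ha.1.add hb.1)

lemma integrable_weight_mul_mul_testFT (hH : IsSobolevSymbol s H) (hφ : IsTestFunction φ) (t : ℝ) :
    Integrable fun ξ => (sobolevWeight t ξ : ℂ) * (H ξ * testFT φ ξ) := by
  obtain ⟨a, b, ha, hb, hab⟩ := hH
  have hsum : Integrable fun ξ => a ξ * (sobolevWeight (t - s) ξ * testFT φ ξ) +
      b ξ * (sobolevWeight (t - s) ξ * testFT φ ξ) :=
    (ha.mul_of_top_left (hφ.memLp_weight_mul_testFT (t - s) ⊤)).add
      (hb.integrable_mul (hφ.memLp_weight_mul_testFT (t - s) 2))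
  refine hsum.congr (ae_of_all _ fun ξ => ?_)
  simp only [← add_mul, eq_sobolevWeight_neg_mul (hab ξ), sub_eq_add_neg, sobolevWeight_add,
    ofReal_mul]
  ring

lemma integrable_mul_testFT (hH : IsSobolevSymbol s H) (hφ : IsTestFunction φ) :
    Integrable fun ξ => H ξ * testFT φ ξ := by
  simpa only [sobolevWeight_zero, ofReal_one, one_mul]
    using hH.integrable_weight_mul_mul_testFT hφ 0

lemma contDiff_testFT_mul_testFT (hH : IsSobolevSymbol s H) (hφ : IsTestFunction φ) :
    ContDiff ℝ ∞ (testFT fun ξ => H ξ * testFT φ ξ) := by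
  refine contDiff_testFT fun n => (hH.integrable_weight_mul_mul_testFT hφ n).mono ?_ ?_
  · exact (continuous_norm.pow n).aestronglyMeasurable.mul (hH.integrable_mul_testFT hφ).norm.1
  · refine ae_of_all _ fun ξ => ?_
    simp only [norm_mul, norm_pow, norm_norm, norm_ofReal_sobolevWeight]
    gcongr
    exact norm_pow_le_sobolevWeight n ξ

lemma integrable_mul_mul_testFT_add (hM : IsSobolevSymbol (-s) M) (hF : MemHs s F)
    (hχ : IsTestFunction χ) :
    Integrable (fun p : R2 × R2 => M p.1 * F p.2 * testFT χ (p.1 + p.2))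
      (volume.prod volume) := by
  have hmeas := aestronglyMeasurable_mul_mul_comp_add hM.aestronglyMeasurable hF.1
    (continuous_testFT hχ.integrable).aestronglyMeasurable
  obtain ⟨a, b, ha, hb, hab⟩ := hM
  have bound := ((integrable_mul_mul_comp_add_of_L1_L2_L2 ha hF.memLp_weight_mul
      (hχ.memLp_weight_mul_testFT |s| 2)).add
    (integrable_mul_mul_comp_add_of_L2_L2_L1 hb hF.memLp_weight_mul
      (memLp_one_iff_integrable.mp (hχ.memLp_weight_mul_testFT |s| 1)))).norm.const_mul
        (2 ^ (|s| / 2))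
  refine bound.mono' hmeas (ae_of_all _ ?_)
  rintro ⟨ξ, η⟩
  have hMξ : M ξ = sobolevWeight s ξ * (a ξ + b ξ) := by
    simpa only [neg_neg] using eq_sobolevWeight_neg_mul (hab ξ)
  have hFη : F η = sobolevWeight (-s) η * (sobolevWeight s η * F η) := eq_sobolevWeight_neg_mul rfl
  calc ‖M ξ * F η * testFT χ (ξ + η)‖
      = sobolevWeight s ξ * sobolevWeight (-s) η *
          ‖(a ξ + b ξ) * (sobolevWeight s η * F η) * testFT χ (ξ + η)‖ := by
        nth_rw 1 [hMξ, hFη]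
        simp only [norm_mul, norm_ofReal_sobolevWeight]
        ring
    _ ≤ 2 ^ (|s| / 2) * sobolevWeight |s| (ξ + η) *
          ‖(a ξ + b ξ) * (sobolevWeight s η * F η) * testFT χ (ξ + η)‖ := by
        exact mul_le_mul_of_nonneg_right (peetre_inequality s ξ η) (norm_nonneg _)
    _ = _ := by
        simp only [Pi.add_apply, ← add_mul, norm_mul, norm_ofReal_sobolevWeight]
        ring

end IsSobolevSymbol

end SobolevSymbol

section DilationLimit

variable {V 𝕜 : Type*} [RCLike 𝕜] [NormedAddCommGroup V] [NormedSpace ℝ V] [MeasurableSpace V]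
  [BorelSpace V] {μ : Measure V}

lemma tendsto_integral_mul_comp_smul {h g : V → 𝕜} (hh : Integrable h μ) (hg : Continuous g)
    {C : ℝ} (hC : ∀ x, ‖g x‖ ≤ C) :
    Tendsto (fun t : ℝ => ∫ x, h x * g (t • x) ∂μ) (𝓝[>] 0) (𝓝 ((∫ x, h x ∂μ) * g 0)) := by
  rw [← integral_mul_const]
  refine tendsto_integral_filter_of_dominated_convergence (fun x => ‖h x‖ * C)
    (.of_forall fun t => hh.1.mul (hg.comp (continuous_const_smul t)).aestronglyMeasurable)
    (.of_forall fun t => ae_of_all _ fun x => ?_) (hh.norm.mul_const C)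
    (ae_of_all _ fun x => ?_)
  · rw [norm_mul]
    gcongr
    exact hC _
  · have : Tendsto (fun t : ℝ => t • x) (𝓝[>] 0) (𝓝 0) :=
      ((continuous_id.smul continuous_const).tendsto' 0 _ (zero_smul ℝ x)).mono_left
        nhdsWithin_le_nhds
    exact ((hg.tendsto 0).comp this).const_mul (h x)

end DilationLimit

section LocalizedFT

variable {s : ℝ} {F M χ ρ : R2 → ℂ}

/-- If `F` is the Fourier transform of a distribution `f`, then `localizedFT χ F ξ` is
`(2π)²` times the Fourier transform of `χ f` at `-ξ`. -/
def localizedFT (χ F : R2 → ℂ) (ξ : R2) : ℂ := ∫ η, F η * testFT χ (ξ + η)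

lemma IsSobolevSymbol.integrable_mul_testFT_add (hF : IsSobolevSymbol s F)
    (hχ : IsTestFunction χ) (ξ : R2) : Integrable fun η => F η * testFT χ (ξ + η) := by
  have hmod := hχ.mul_left (contDiff_exp_I_mul_rdot ξ)
  simpa only [testFT_exp_mul, add_comm ξ] using hF.integrable_mul_testFT hmod

lemma localizedFT_finset_sum {ι : Type*} (S : Finset ι) {f : ι → R2 → ℂ}
    (hf : ∀ i ∈ S, IsTestFunction (f i)) (hF : IsSobolevSymbol s F) (ξ : R2) :
    localizedFT (fun x => ∑ i ∈ S, f i x) F ξ = ∑ i ∈ S, localizedFT (f i) F ξ := by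
  simp only [localizedFT, testFT_finset_sum S fun i hi => (hf i hi).integrable, Finset.mul_sum]
  exact integral_finsetSum S fun i hi => hF.integrable_mul_testFT_add (hf i hi) ξ

lemma integrable_mul_localizedFT (hM : IsSobolevSymbol (-s) M) (hF : MemHs s F)
    (hχ : IsTestFunction χ) : Integrable fun ξ => M ξ * localizedFT χ F ξ := by
  simpa only [localizedFT, mul_assoc, integral_const_mul] using
    (hM.integrable_mul_mul_testFT_add hF hχ).integral_prod_left

/-- Both sides pair the distribution of `F` with `χ` times a mollification of that of `M`. -/
lemma integral_mul_testFT_testFT_mul (hM : IsSobolevSymbol (-s) M) (hF : MemHs s F)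
    (hχ : IsTestFunction χ) (hρ : IsTestFunction ρ) :
    ∫ η, F η * testFT (fun y => testFT (fun ξ => M ξ * testFT ρ ξ) y * χ y) η =
      ∫ ξ, M ξ * localizedFT χ F ξ * testFT ρ ξ := by
  have hint : Integrable (Function.uncurry fun ξ η : R2 =>
      M ξ * F η * testFT χ (ξ + η) * testFT ρ ξ) (volume.prod volume) :=
    (hM.integrable_mul_mul_testFT_add hF hχ).mul_bdd
      ((continuous_testFT hρ.integrable).comp continuous_fst).aestronglyMeasurable
      (ae_of_all _ fun p => norm_testFT_le ρ p.1)
  calc ∫ η, F η * testFT (fun y => testFT (fun ξ => M ξ * testFT ρ ξ) y * χ y) η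
      = ∫ η, ∫ ξ, M ξ * F η * testFT χ (ξ + η) * testFT ρ ξ := by
        simp only [testFT_testFT_mul (hM.integrable_mul_testFT hρ) hχ.integrable,
          ← integral_const_mul]
        congr! 4
        rw [add_comm]; ring
    _ = ∫ ξ, ∫ η, M ξ * F η * testFT χ (ξ + η) * testFT ρ ξ := (integral_integral_swap hint).symm
    _ = ∫ ξ, M ξ * localizedFT χ F ξ * testFT ρ ξ := by
        refine integral_congr_ae (ae_of_all _ fun ξ => ?_)
        beta_reduce
        rw [integral_mul_const, localizedFT, ← integral_const_mul]
        simp only [mul_assoc]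

variable {S : Set R2} {δ t : ℝ}

lemma VanishesOn.testFT_mul_testFT_smul_eq_zero_of_notMem_cthickening (hvanish : VanishesOn Sᶜ F)
    (hρ : IsTestFunction ρ) (hsupp : tsupport ρ ⊆ Metric.closedBall 0 1) (ht : 0 < t) (htδ : t ≤ δ)
    {y : R2} (hy : y ∉ Metric.cthickening δ S) :
    testFT (fun ξ => F ξ * testFT ρ (t • ξ)) y = 0 := by
  refine hvanish.testFT_mul_testFT_smul_eq_zero hρ hsupp ht fun z hz hzS => hy ?_
  rw [smul_zero, add_zero, mul_one, Metric.mem_closedBall, dist_comm] at hz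
  exact Metric.mem_cthickening_of_dist_le y z δ S hzS (hz.trans htδ)

/-- The mollification of the distribution of `F` is supported where `χ = 1`, so it is unchanged by
`χ` and Fourier inversion applies to it. -/
lemma integral_mul_testFT_add_mul_testFT_smul (hF : MemHs s F) (hcont : Continuous F)
    (hS : Bornology.IsBounded S) (hvanish : VanishesOn Sᶜ F) (hχ : IsTestFunction χ)
    (hone : ∀ x ∈ Metric.cthickening δ S, χ x = 1) (hρ : IsTestFunction ρ)
    (hsupp : tsupport ρ ⊆ Metric.closedBall 0 1) (ht : 0 < t) (htδ : t ≤ δ) (ξ : R2) :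
    ∫ η, F η * testFT χ (ξ + η) * testFT ρ (t • η) =
      (2 * π) ^ 2 * (F (-ξ) * testFT ρ (t • -ξ)) := by
  have hzero (y) (hy : y ∉ Metric.cthickening δ S) :=
    hvanish.testFT_mul_testFT_smul_eq_zero_of_notMem_cthickening hρ hsupp ht htδ hy
  obtain ⟨φ, hφ, hφt⟩ := hρ.exists_testFT_eq_comp_smul ht
  simp only [← hφt] at hzero ⊢
  have hint := hF.isSobolevSymbol.integrable_mul_testFT hφ
  have hcompact : HasCompactSupport (testFT fun η => F η * testFT φ η) :=
    .intro (Metric.isCompact_of_isClosed_isBounded Metric.isClosed_cthickening hS.cthickening) hzero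
  have hmul_one (y : R2) : testFT (fun η => F η * testFT φ η) y * χ y =
      testFT (fun η => F η * testFT φ η) y := by
    by_cases hy : y ∈ Metric.cthickening δ S
    · rw [hone y hy, mul_one]
    · rw [hzero y hy, zero_mul]
  calc ∫ η, F η * testFT χ (ξ + η) * testFT φ η
      = ∫ η, F η * testFT φ η * testFT χ (ξ + η) := by simp only [mul_right_comm]
    _ = testFT (testFT fun η => F η * testFT φ η) ξ := by
        rw [← testFT_testFT_mul hint hχ.integrable]
        simp only [hmul_one]
    _ = (2 * π) ^ 2 * (F (-ξ) * testFT φ (-ξ)) :=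
        testFT_testFT (hcont.mul (continuous_testFT hφ.integrable)) hint
          ((continuous_testFT hint).integrable_of_hasCompactSupport hcompact) ξ

lemma localizedFT_eq_of_eqOn_one (hF : MemHs s F) (hcont : Continuous F)
    (hS : Bornology.IsBounded S) (hvanish : VanishesOn Sᶜ F) (hχ : IsTestFunction χ) (hδ : 0 < δ)
    (hone : ∀ x ∈ Metric.cthickening δ S, χ x = 1) (ξ : R2) :
    localizedFT χ F ξ = (2 * π) ^ 2 * F (-ξ) := by
  obtain ⟨ρ, hρ, hsupp, hρ_ne⟩ := exists_isTestFunction_integral_ne_zero volume (0 : R2) one_pos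
  have hlim := tendsto_integral_mul_comp_smul (hF.isSobolevSymbol.integrable_mul_testFT_add hχ ξ)
    (continuous_testFT hρ.integrable) (norm_testFT_le ρ)
  have hlim' : Tendsto (fun t : ℝ => (2 * π : ℂ) ^ 2 * (F (-ξ) * testFT ρ (t • -ξ))) (𝓝[>] 0)
      (𝓝 ((2 * π) ^ 2 * (F (-ξ) * testFT ρ 0))) := by
    have := continuous_testFT hρ.integrable
    exact (Continuous.tendsto' (by fun_prop) _ _ (by rw [zero_smul])).mono_left nhdsWithin_le_nhds
  have heq := tendsto_nhds_unique_of_eventuallyEq hlim hlim' <| by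
    filter_upwards [Ioc_mem_nhdsGT hδ] with t ht
    exact integral_mul_testFT_add_mul_testFT_smul hF hcont hS hvanish hχ hone hρ hsupp ht.1 ht.2 ξ
  rw [← mul_assoc, testFT_zero_right] at heq
  exact mul_right_cancel₀ hρ_ne heq

end LocalizedFT

section ConeCondition

variable {E : Type*} [NormedAddCommGroup E] [NormedSpace ℝ E]

/-- Uniform interior cone condition near `x`: the truncated cones `y + ⋃ₜ ball (t • e) (t * c)`
with a common axis `e` and vertices `y ∈ closure Γ` close to `x` are contained in `Γ`. -/
def ConeConditionAt (Γ : Set E) (x : E) : Prop :=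
  ∃ U ∈ 𝓝 x, ∃ (e : E) (c : ℝ), 0 < c ∧ ∀ᶠ t in 𝓝[>] (0 : ℝ), ∀ y ∈ U ∩ closure Γ,
    Metric.ball (y + t • e) (t * c) ⊆ Γ

variable {Γ : Set E} {x : E}

lemma coneConditionAt_of_notMem_closure (hx : x ∉ closure Γ) : ConeConditionAt Γ x :=
  ⟨(closure Γ)ᶜ, isClosed_closure.isOpen_compl.mem_nhds hx, 0, 1, one_pos,
    .of_forall fun _ _ hy => absurd hy.2 hy.1⟩

lemma coneConditionAt_of_mem_interior (hx : x ∈ interior Γ) : ConeConditionAt Γ x := by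
  obtain ⟨r, hr, hball⟩ := Metric.mem_nhds_iff.mp (mem_interior_iff_mem_nhds.mp hx)
  refine ⟨Metric.ball x (r / 2), Metric.ball_mem_nhds x (half_pos hr), 0, 1, one_pos, ?_⟩
  filter_upwards [Ioc_mem_nhdsGT (half_pos hr)] with t ht y hy
  refine (Metric.ball_subset_ball' ?_).trans hball
  rw [smul_zero, add_zero]
  linarith [ht.2, Metric.mem_ball.mp hy.1]

end ConeCondition

section LipschitzDomain

lemma lipschitz_graph_lt_of_norm_lt {L : ℝ≥0} {f : ℝ → ℝ} (hf : LipschitzWith L f) {y d : R2}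
    (hy : f (y 0) ≤ y 1) {t : ℝ} (hd : ‖d‖ < t * (1 + (L : ℝ))⁻¹) :
    f (y 0 + d 0) < y 1 + t + d 1 := by
  have coord (i : Fin 2) : |d i| ≤ ‖d‖ := PiLp.norm_apply_le d i
  have lipschitz := hf.dist_le_mul (y 0 + d 0) (y 0)
  rw [Real.dist_eq, Real.dist_eq, add_sub_cancel_left] at lipschitz
  have hd' : ‖d‖ * (1 + L) < t := by
    rwa [← div_eq_mul_inv, lt_div_iff₀ (by positivity)] at hd
  have hL : (L : ℝ) * |d 0| ≤ L * ‖d‖ := by gcongr; exact coord 0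
  linarith [le_abs_self (f (y 0 + d 0) - f (y 0)), neg_abs_le (d 1), coord 1]

lemma le_of_mem_closure_of_forall_mem_iff {X : Type*} [TopologicalSpace X] {Γ U : Set X}
    {u v : X → ℝ} (hu : Continuous u) (hv : Continuous v) (hU : IsOpen U)
    (hiff : ∀ y ∈ U, (y ∈ Γ ↔ u y < v y)) {y : X} (hyU : y ∈ U) (hy : y ∈ closure Γ) : u y ≤ v y :=
  closure_minimal (fun w hw => ((hiff w hw.1).mp hw.2).le) (isClosed_le hu hv)
    (hU.inter_closure ⟨hyU, hy⟩)

variable {Γ : Set R2}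

lemma coneConditionAt_of_lipschitz_graph {x : R2} {e : R2 ≃ₗᵢ[ℝ] R2} {L : ℝ≥0} {f : ℝ → ℝ}
    {U : Set R2} (hf : LipschitzWith L f) (hU : IsOpen U) (hxU : x ∈ U)
    (hiff : ∀ y ∈ U, (y ∈ Γ ↔ f (e y 0) < e y 1)) : ConeConditionAt Γ x := by
  obtain ⟨r, hr, hball⟩ := Metric.isOpen_iff.mp hU x hxU
  obtain ⟨v, hv⟩ : ∃ v : R2, e v = EuclideanSpace.single 1 (1 : ℝ) := e.surjective _
  have hv_norm : ‖v‖ = 1 := by rw [← e.norm_map, hv, PiLp.norm_single, norm_one]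
  refine ⟨Metric.ball x (r / 2), Metric.ball_mem_nhds x (half_pos hr), v, (1 + (L : ℝ))⁻¹,
    by positivity, ?_⟩
  filter_upwards [Ioc_mem_nhdsGT (by positivity : 0 < r / 4)] with t ht y ⟨hyx, hyΓ⟩ z hz
  have hgraph : f (e y 0) ≤ e y 1 :=
    le_of_mem_closure_of_forall_mem_iff (hf.continuous.comp (by fun_prop)) (by fun_prop) hU hiff
      (hball (Metric.ball_subset_ball (by linarith) hyx)) hyΓ
  obtain ⟨d, rfl⟩ : ∃ d, z = y + t • v + d := ⟨z - (y + t • v), by abel⟩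
  rw [mem_ball_iff_norm, add_sub_cancel_left] at hz
  have hzx : y + t • v + d ∈ Metric.ball x r := by
    have hstep : ‖t • v‖ = t := by rw [norm_smul, hv_norm, Real.norm_of_nonneg ht.1.le, mul_one]
    have hdt : t * (1 + (L : ℝ))⁻¹ ≤ t :=
      mul_le_of_le_one_right ht.1.le (inv_le_one_of_one_le₀ (by simp))
    have triangle := norm_add₃_le (a := y - x) (b := t • v) (c := d)
    rw [mem_ball_iff_norm, show y + t • v + d - x = y - x + t • v + d by abel]
    linarith [mem_ball_iff_norm.mp hyx, ht.2]
  rw [hiff _ (hball hzx)]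
  simpa [hv] using lipschitz_graph_lt_of_norm_lt hf hgraph (d := e d) (by rwa [e.norm_map])

lemma IsLipschitzDomain.coneConditionAt (hΓ : IsLipschitzDomain Γ) (x : R2) :
    ConeConditionAt Γ x := by
  obtain ⟨-, -, -, hgraph⟩ := hΓ
  by_cases hcl : x ∈ closure Γ
  · by_cases hint : x ∈ interior Γ
    · exact coneConditionAt_of_mem_interior hint
    · obtain ⟨e, L, f, U, hf, hU, hxU, hiff⟩ := hgraph x ⟨hcl, hint⟩
      exact coneConditionAt_of_lipschitz_graph hf hU hxU hiff
  · exact coneConditionAt_of_notMem_closure hcl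

end LipschitzDomain

section DualDensity

variable {s : ℝ} {Γ : Set R2} {F M χ : R2 → ℂ}

lemma disjoint_tsupport_testFT_mul_closure (hM : VanishesOn Γ M) {ρ : R2 → ℂ}
    (hρ : IsTestFunction ρ) {e : R2} {c t : ℝ} (hc : 0 < c) (ht : 0 < t)
    (hsupp : tsupport ρ ⊆ Metric.closedBall e (c / 2))
    (hcone : ∀ y ∈ tsupport χ ∩ closure Γ, Metric.ball (y + t • e) (t * c) ⊆ Γ) :
    Disjoint (tsupport fun y => testFT (fun ξ => M ξ * testFT ρ (t • ξ)) y * χ y) (closure Γ) := by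
  refine Set.disjoint_left.mpr fun y hy hyΓ => ?_
  have hyχ : y ∈ tsupport χ := tsupport_mul_subset_right hy
  obtain ⟨z, hz_ball, hz⟩ := mem_closure_iff_nhds.mp hy _
    (Metric.ball_mem_nhds y (by positivity : 0 < t * (c / 2)))
  refine hz (mul_eq_zero_of_left ?_ _)
  refine hM.testFT_mul_testFT_smul_eq_zero hρ hsupp ht fun w hw => hcone y ⟨hyχ, hyΓ⟩ ?_
  have triangle := dist_triangle w (z + t • e) (y + t • e)
  rw [dist_add_right] at triangle
  rw [Metric.mem_ball] at hz_ball ⊢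
  linarith [Metric.mem_closedBall.mp hw]

/-- Near `x`, pushing the distribution of `M` a little into the cone direction (by a mollifier
centred at `e`) makes it vanish on a neighbourhood of `closure Γ`, where that of `F` lives. -/
lemma integral_mul_localizedFT_eq_zero_of_tsupport_subset (hM : IsSobolevSymbol (-s) M)
    (hMΓ : VanishesOn Γ M) (hF : MemHs s F) (hFΓ : VanishesOn (closure Γ)ᶜ F)
    (hχ : IsTestFunction χ) {U : Set R2} (hχU : tsupport χ ⊆ U) {e : R2} {c : ℝ} (hc : 0 < c)
    (hcone : ∀ᶠ t in 𝓝[>] (0 : ℝ), ∀ y ∈ U ∩ closure Γ, Metric.ball (y + t • e) (t * c) ⊆ Γ) :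
    ∫ ξ, M ξ * localizedFT χ F ξ = 0 := by
  obtain ⟨ρ, hρ, hsupp, hρ_ne⟩ := exists_isTestFunction_integral_ne_zero volume e (half_pos hc)
  have hlim := tendsto_integral_mul_comp_smul (integrable_mul_localizedFT hM hF hχ)
    (continuous_testFT hρ.integrable) (norm_testFT_le ρ)
  have hzero : ∀ᶠ t in 𝓝[>] (0 : ℝ), ∫ ξ, M ξ * localizedFT χ F ξ * testFT ρ (t • ξ) = 0 := by
    filter_upwards [hcone, self_mem_nhdsWithin] with t ht_cone ht
    have hdisj := disjoint_tsupport_testFT_mul_closure (χ := χ) hMΓ hρ hc ht hsupp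
      fun y hy => ht_cone y ⟨hχU hy.1, hy.2⟩
    obtain ⟨φ, hφ, hφt⟩ := hρ.exists_testFT_eq_comp_smul ht
    simp only [← hφt] at hdisj ⊢
    rw [← integral_mul_testFT_testFT_mul hM hF hχ hφ]
    exact hFΓ _ (hχ.mul_left (hM.contDiff_testFT_mul_testFT hφ)) hdisj.subset_compl_right
  have heq := tendsto_nhds_unique_of_eventuallyEq hlim tendsto_const_nhds hzero
  rw [testFT_zero_right] at heq
  exact (mul_eq_zero.mp heq).resolve_right hρ_ne

lemma integral_mul_localizedFT_eq_zero (hΓ : ∀ x, ConeConditionAt Γ x)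
    (hM : IsSobolevSymbol (-s) M) (hMΓ : VanishesOn Γ M) (hF : MemHs s F)
    (hFΓ : VanishesOn (closure Γ)ᶜ F) (hχ : IsTestFunction χ) :
    ∫ ξ, M ξ * localizedFT χ F ξ = 0 := by
  choose U hU e c hc hcone using hΓ
  obtain ⟨S, f, hf, rfl⟩ := hχ.exists_sum_eq_of_subset_iUnion (U := fun x => interior (U x))
    (fun _ => isOpen_interior)
    fun x _ => Set.mem_iUnion.mpr ⟨x, mem_interior_iff_mem_nhds.mpr (hU x)⟩
  have hsum (ξ : R2) := localizedFT_finset_sum Finset.univ (fun i _ => (hf i).1)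
    hF.isSobolevSymbol ξ
  simp only [hsum, Finset.mul_sum]
  rw [integral_finsetSum _ fun i _ => integrable_mul_localizedFT hM hF (hf i).1]
  exact Finset.sum_eq_zero fun i _ => integral_mul_localizedFT_eq_zero_of_tsupport_subset hM hMΓ
    hF hFΓ (hf i).1 ((hf i).2.trans interior_subset) (hc i) (hcone i)

/-- The dual form of the density of `C_c^∞(Γ)` in `H̃^s(Γ)`. -/
lemma integrable_and_integral_mul_comp_neg_eq_zero (hΓ : ∀ x, ConeConditionAt Γ x)
    (hbdd : Bornology.IsBounded Γ) (hM : IsSobolevSymbol (-s) M) (hMΓ : VanishesOn Γ M)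
    (hF : MemHs s F) (hcont : Continuous F) (hFΓ : VanishesOn (closure Γ)ᶜ F) :
    Integrable (fun ξ => M ξ * F (-ξ)) ∧ ∫ ξ, M ξ * F (-ξ) = 0 := by
  obtain ⟨χ, hχ, hone⟩ := exists_isTestFunction_eqOn_one (hbdd.closure.cthickening (δ := 1))
  have hloc (ξ : R2) := localizedFT_eq_of_eqOn_one hF hcont hbdd.closure hFΓ hχ one_pos hone ξ
  have hπ : (2 * π : ℂ) ^ 2 ≠ 0 := by simp [Real.pi_ne_zero]
  have hint := integrable_mul_localizedFT hM hF hχ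
  have hzero := integral_mul_localizedFT_eq_zero hΓ hM hMΓ hF hFΓ hχ
  simp only [hloc, mul_left_comm (M _)] at hint hzero
  rw [integral_const_mul] at hzero
  exact ⟨(integrable_const_mul_iff hπ.isUnit _).mp hint, (mul_eq_zero.mp hzero).resolve_left hπ⟩

end DualDensity

section SingleLayerMultiplier

variable {k s : ℝ} {ξ : R2}

lemma mT_of_norm_lt (h : ‖ξ‖ < k) :
    mT k ξ = ((2 * √(k ^ 2 - ‖ξ‖ ^ 2))⁻¹ : ℝ) * I := by
  rw [mT, rootk, if_pos h, div_eq_mul_inv, mul_comm]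
  push_cast
  rfl

lemma mT_of_le_norm (h : k ≤ ‖ξ‖) : mT k ξ = ((2 * √(‖ξ‖ ^ 2 - k ^ 2))⁻¹ : ℝ) := by
  rw [mT, rootk, if_neg h.not_gt, mul_left_comm, div_mul_cancel_left₀ I_ne_zero]
  push_cast
  rfl

lemma norm_mT (hk : 0 ≤ k) (ξ : R2) : ‖mT k ξ‖ = (2 * √|k ^ 2 - ‖ξ‖ ^ 2|)⁻¹ := by
  rcases lt_or_ge ‖ξ‖ k with h | h
  · have : 0 ≤ k ^ 2 - ‖ξ‖ ^ 2 := by nlinarith [norm_nonneg ξ]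
    rw [mT_of_norm_lt h, norm_mul, norm_I, mul_one, norm_real,
      Real.norm_of_nonneg (by positivity), abs_of_nonneg this]
  · have : k ^ 2 - ‖ξ‖ ^ 2 ≤ 0 := by nlinarith
    rw [mT_of_le_norm h, norm_real, Real.norm_of_nonneg (by positivity), abs_of_nonpos this,
      neg_sub]

lemma mT_re_nonneg (k : ℝ) (ξ : R2) : 0 ≤ (mT k ξ).re := by
  rcases lt_or_ge ‖ξ‖ k with h | h
  · rw [mT_of_norm_lt h, re_ofReal_mul, I_re, mul_zero]
  · rw [mT_of_le_norm h, ofReal_re]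
    positivity

lemma mT_im_nonneg (k : ℝ) (ξ : R2) : 0 ≤ (mT k ξ).im := by
  rcases lt_or_ge ‖ξ‖ k with h | h
  · rw [mT_of_norm_lt h, im_ofReal_mul, I_im, mul_one]
    positivity
  · rw [mT_of_le_norm h, ofReal_im]

lemma mT_ne_zero (hk : 0 ≤ k) (hξ : ‖ξ‖ ≠ k) : mT k ξ ≠ 0 := by
  have : k ^ 2 - ‖ξ‖ ^ 2 ≠ 0 := sub_ne_zero.mpr fun h =>
    hξ ((pow_left_inj₀ hk (norm_nonneg ξ) two_ne_zero).mp h).symm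
  rw [← norm_pos_iff, norm_mT hk]
  positivity

lemma measurable_mT (k : ℝ) : Measurable (mT k) := by
  unfold mT rootk
  refine measurable_const.div (measurable_const.mul ?_)
  exact .ite (measurableSet_lt measurable_norm measurable_const) (by fun_prop) (by fun_prop)

lemma locallyIntegrable_inv_sqrt_abs : LocallyIntegrable fun x : ℝ => (√|x|)⁻¹ := by
  refine locallyIntegrable_of_norm_le_rpow (α := 1 / 2) (C := 1) (Module.finrank_self ℝ).ge
    (by norm_num) (ae_of_all _ fun x => ?_) (Measurable.aestronglyMeasurable (by fun_prop))
  rw [Real.norm_of_nonneg (by positivity), one_mul, Real.rpow_neg (norm_nonneg x),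
    ← Real.sqrt_eq_rpow, Real.norm_eq_abs]

lemma mul_inv_sqrt_abs_sq_sub_sq_le (hk : 0 < k) {r R : ℝ} (hr : 0 ≤ r) (hrR : r ≤ R) :
    r * (2 * √|k ^ 2 - r ^ 2|)⁻¹ ≤ R / 2 * (√k)⁻¹ * (√|r - k|)⁻¹ := by
  have hfactor : √|k ^ 2 - r ^ 2| = √(k + r) * √|r - k| := by
    rw [← Real.sqrt_mul (by positivity), sq_sub_sq, abs_mul, abs_of_pos (by positivity),
      abs_sub_comm]
  calc r * (2 * √|k ^ 2 - r ^ 2|)⁻¹ = r / 2 * (√(k + r))⁻¹ * (√|r - k|)⁻¹ := by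
        rw [hfactor, mul_inv, mul_inv]; ring
    _ ≤ R / 2 * (√k)⁻¹ * (√|r - k|)⁻¹ := by
        have hR : 0 ≤ R := hr.trans hrR
        gcongr
        exact le_add_of_nonneg_right hr

lemma integrableOn_mT_ball (hk : 0 < k) (R : ℝ) :
    IntegrableOn (mT k) (Metric.ball (0 : R2) R) := by
  rw [IntegrableOn, ← integrable_norm_iff (measurable_mT k).aestronglyMeasurable]
  simp only [norm_mT hk.le]
  rw [← IntegrableOn,
    integrableOn_fun_norm_addHaar volume (f := fun r : ℝ => (2 * √|k ^ 2 - r ^ 2|)⁻¹)]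
  have hdom : IntegrableOn (fun r => R / 2 * (√k)⁻¹ * (√|r - k|)⁻¹) (Set.Ioo 0 R) := by
    have hint : IntervalIntegrable (fun x : ℝ => (√|x|)⁻¹) volume (0 - k) (R - k) :=
      (locallyIntegrable_inv_sqrt_abs.integrableOn_isCompact isCompact_uIcc).intervalIntegrable
    have hshift := hint.comp_sub_right k
    simp only [sub_add_cancel] at hshift
    exact (hshift.1.mono_set Set.Ioo_subset_Ioc_self).const_mul _
  refine hdom.mono' (Measurable.aestronglyMeasurable (by fun_prop)) ?_
  filter_upwards [ae_restrict_mem measurableSet_Ioo] with r hr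
  rw [finrank_euclideanSpace_fin, smul_eq_mul, pow_one,
    Real.norm_of_nonneg (mul_nonneg hr.1.le (by positivity))]
  exact mul_inv_sqrt_abs_sq_sub_sq_le hk hr.1.le hr.2.le

lemma norm_mT_le_sobolevWeight (hk : 0 < k) (hξ : 2 * k ≤ ‖ξ‖) :
    ‖mT k ξ‖ ≤ √(1 + 1 / (4 * k ^ 2)) * sobolevWeight (-1) ξ := by
  have hweight : sobolevWeight (-1) ξ = (√(1 + ‖ξ‖ ^ 2))⁻¹ := by
    rw [sobolevWeight, neg_div, Real.rpow_neg (by positivity), Real.sqrt_eq_rpow]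
  have hsq : (2 * k) ^ 2 ≤ ‖ξ‖ ^ 2 := by gcongr
  have hpos : 0 < ‖ξ‖ ^ 2 - k ^ 2 := by nlinarith
  have hcomp : 1 + ‖ξ‖ ^ 2 ≤ (1 + 1 / (4 * k ^ 2)) * (2 ^ 2 * (‖ξ‖ ^ 2 - k ^ 2)) := by
    calc 1 + ‖ξ‖ ^ 2 ≤ (1 + 1 / (4 * k ^ 2)) * ‖ξ‖ ^ 2 := by
          have : 1 ≤ 1 / (4 * k ^ 2) * ‖ξ‖ ^ 2 := by
            rw [one_div_mul_eq_div, one_le_div (by positivity)]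
            linarith
          linarith
      _ ≤ _ := by gcongr; linarith
  have hsqrt : √(1 + ‖ξ‖ ^ 2) ≤ √(1 + 1 / (4 * k ^ 2)) * (2 * √(‖ξ‖ ^ 2 - k ^ 2)) := by
    refine (Real.sqrt_le_sqrt hcomp).trans_eq ?_
    rw [Real.sqrt_mul (by positivity), Real.sqrt_mul (by positivity), Real.sqrt_sq two_pos.le]
  rw [norm_mT hk.le, hweight, abs_sub_comm, abs_of_pos hpos, ← div_eq_mul_inv,
    le_div_iff₀ (by positivity), inv_mul_le_iff₀ (by positivity)]
  linarith

lemma norm_sobolevWeight_mul_mT_mul_le (hk : 0 < k) (hξ : 2 * k ≤ ‖ξ‖) (z : ℂ) :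
    ‖(sobolevWeight (s + 1) ξ : ℂ) * (mT k ξ * z)‖ ≤
      √(1 + 1 / (4 * k ^ 2)) * ‖(sobolevWeight s ξ : ℂ) * z‖ := by
  have hpos := sobolevWeight_pos (s + 1) ξ
  calc ‖(sobolevWeight (s + 1) ξ : ℂ) * (mT k ξ * z)‖
      = sobolevWeight (s + 1) ξ * (‖mT k ξ‖ * ‖z‖) := by
        rw [norm_mul, norm_mul, norm_ofReal_sobolevWeight]
    _ ≤ sobolevWeight (s + 1) ξ * (√(1 + 1 / (4 * k ^ 2)) * sobolevWeight (-1) ξ * ‖z‖) := by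
        gcongr
        exact norm_mT_le_sobolevWeight hk hξ
    _ = √(1 + 1 / (4 * k ^ 2)) * (sobolevWeight (s + 1 + -1) ξ * ‖z‖) := by
        rw [sobolevWeight_add (s + 1)]; ring
    _ = √(1 + 1 / (4 * k ^ 2)) * ‖(sobolevWeight s ξ : ℂ) * z‖ := by
        rw [add_neg_cancel_right, norm_mul, norm_ofReal_sobolevWeight]

/-- Near the circle `‖ξ‖ = k` the multiplier is merely integrable; away from it, it gains one
order of decay. -/
lemma MemHs.isSobolevSymbol_mT_mul {f : R2 → ℂ} (hk : 0 < k) (hf : MemHs s f)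
    (hcont : Continuous f) : IsSobolevSymbol (s + 1) fun ξ => mT k ξ * f ξ := by
  set w : R2 → ℂ := fun ξ => sobolevWeight (s + 1) ξ * (mT k ξ * f ξ) with hw
  have hmeas : Measurable w := by
    have := (continuous_sobolevWeight (E := R2) (s + 1)).measurable
    exact (measurable_ofReal.comp this).mul ((measurable_mT k).mul hcont.measurable)
  refine ⟨(Metric.closedBall 0 (2 * k)).indicator w, (Metric.closedBall 0 (2 * k))ᶜ.indicator w,
    ?_, ?_, fun ξ => (Set.indicator_self_add_compl_apply _ w ξ).symm⟩
  · rw [integrable_indicator_iff Metric.isClosed_closedBall.measurableSet]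
    have hmT : IntegrableOn (mT k) (Metric.closedBall 0 (2 * k)) :=
      (integrableOn_mT_ball hk (2 * k + 1)).mono_set
        (Metric.closedBall_subset_ball (lt_add_one _))
    have hg : Continuous fun ξ => sobolevWeight (s + 1) ξ * f ξ :=
      (continuous_ofReal.comp (continuous_sobolevWeight _)).mul hcont
    simpa only [hw, mul_left_comm (mT k _)] using
      hmT.mul_continuousOn hg.continuousOn (isCompact_closedBall 0 (2 * k))
  · refine hf.memLp_weight_mul.of_le_mul (c := √(1 + 1 / (4 * k ^ 2)))
      (hmeas.indicator Metric.isClosed_closedBall.measurableSet.compl).aestronglyMeasurable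
      (ae_of_all _ fun ξ => ?_)
    by_cases hξ : ξ ∈ (Metric.closedBall (0 : R2) (2 * k))ᶜ
    · rw [Set.indicator_of_mem hξ]
      rw [Set.mem_compl_iff, mem_closedBall_zero_iff, not_le] at hξ
      exact norm_sobolevWeight_mul_mT_mul_le hk hξ.le (f ξ)
    · rw [Set.indicator_of_notMem hξ, norm_zero]
      positivity

end SingleLayerMultiplier

lemma ae_eq_zero_of_integral_eq_zero_of_re_nonneg_of_im_nonneg {α : Type*} [MeasurableSpace α]
    {μ : Measure α} {z : α → ℂ} (hz : Integrable z μ) (hre : ∀ x, 0 ≤ (z x).re)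
    (him : ∀ x, 0 ≤ (z x).im) (h : ∫ x, z x ∂μ = 0) : z =ᵐ[μ] 0 := by
  have hre_int : ∫ x, (z x).re ∂μ = 0 := (integral_re hz).trans (by rw [h, map_zero])
  have him_int : ∫ x, (z x).im ∂μ = 0 := (integral_im hz).trans (by rw [h, map_zero])
  filter_upwards [(integral_eq_zero_iff_of_nonneg hre hz.re).mp hre_int,
    (integral_eq_zero_iff_of_nonneg him hz.im).mp him_int] with x hx_re hx_im
  exact Complex.ext hx_re hx_im

/-- Proposition A.3, kernel of `T` is trivial: if `ψ ∈ H̃^{-1/2}(Γ)`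
satisfies `Tψ = 0` (i.e. the restriction of `Tψ` to `Γ` vanishes), then `ψ = 0`. -/
theorem statement17 (Γ : Set R2) (hΓ : IsLipschitzDomain Γ) (k : ℝ) (hk : 0 < k)
    (ψ : HTildeElt (-(1/2) : ℝ) Γ)
    (h : AgreeOn Γ (fun ξ => mT k ξ * ψ.ft ξ) (fun _ => 0)) :
    ∀ ξ : R2, ψ.ft ξ = 0 := by
  have hsymbol : IsSobolevSymbol (- -(1/2)) fun ξ => mT k ξ * ψ.ft ξ := by
    simpa only [show (-(1/2) + 1 : ℝ) = - -(1/2) by norm_num] using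
      ψ.memHs.isSobolevSymbol_mT_mul hk ψ.cont
  obtain ⟨hint, hzero⟩ := integrable_and_integral_mul_comp_neg_eq_zero hΓ.coneConditionAt hΓ.2.1
    hsymbol h.vanishesOn ψ.memHs.conj_neg (continuous_conj.comp (ψ.cont.comp continuous_neg))
    ψ.vanishesOn_compl_closure.conj_neg
  have hform (ξ : R2) : mT k ξ * ψ.ft ξ * starRingEnd ℂ (ψ.ft (- -ξ)) =
      (‖ψ.ft ξ‖ ^ 2 : ℝ) * mT k ξ := by
    rw [neg_neg, mul_assoc, mul_conj', mul_comm, ofReal_pow]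
  simp only [hform] at hint hzero
  have hae := ae_eq_zero_of_integral_eq_zero_of_re_nonneg_of_im_nonneg hint
    (fun ξ => by rw [re_ofReal_mul]; exact mul_nonneg (sq_nonneg _) (mT_re_nonneg k ξ))
    (fun ξ => by rw [im_ofReal_mul]; exact mul_nonneg (sq_nonneg _) (mT_im_nonneg k ξ)) hzero
  have hsphere : ∀ᵐ ξ : R2, ξ ∉ Metric.sphere 0 k :=
    measure_eq_zero_iff_ae_notMem.mp (Measure.addHaar_sphere volume 0 k)
  refine congrFun ((ψ.cont.ae_eq_iff_eq volume continuous_zero).mp ?_)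
  filter_upwards [hae, hsphere] with ξ hξ hξk
  have hmT := mT_ne_zero hk.le fun hnorm => hξk (mem_sphere_zero_iff_norm.mpr hnorm)
  simpa [hmT] using hξ

end
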